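/- Let k_1 ≥ k_2 ≥ 2 be integers and set κ = k_1² + k_2²(k_2 − 1)/2. Then S_U(k_1, k_2) ≤ κ(lg κ + lg lg κ + 1), where lg denotes the base-2 logarithm. -/

import Mathlib

/-- The multiset of all `s`-gapped subsequences of a binary string (all lengths,
including the empty subsequence), counted with multiplicity over index choices:
consecutive chosen indices must differ by at least `s`. -/
def gappedSubseqs (s : ℕ) : List Bool → Multiset (List Bool)
  | [] => {[]}
  | a :: l => gappedSubseqs s l + (gappedSubseqs s (l.drop (s - 1))).map (a :: ·)
termination_by x => x.length
decreasing_by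
  · simp
  · simp only [List.length_drop, List.length_cons]; omega

/-- The `s`-gapped `k`-deck: all `s`-gapped subsequences of length between 1 and `k`. -/
def gDeck (s k : ℕ) (x : List Bool) : Multiset (List Bool) :=
  (gappedSubseqs s x).filter (fun w => 1 ≤ w.length ∧ w.length ≤ k)

/-- The exact `s`-gapped `k`-deck: all `s`-gapped subsequences of length exactly `k`. -/
def dDeck (s k : ℕ) (x : List Bool) : Multiset (List Bool) :=
  (gappedSubseqs s x).filter (fun w => w.length = k)

/-- The classical (ungapped) `k`-deck: the multiset of all length-`k` subsequences. -/
def deck (k : ℕ) (x : List Bool) : Multiset (List Bool) :=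
  (gappedSubseqs 1 x).filter (fun w => w.length = k)

/-- The gapped `k`-deck `B^(k)` (gap `2`). -/
def Bdeck (k : ℕ) (x : List Bool) : Multiset (List Bool) := gDeck 2 k x

/-- `B_L^(k)`: the gapped `k`-deck of the string punctured on the left. -/
def BLdeck (k : ℕ) (x : List Bool) : Multiset (List Bool) := Bdeck k x.tail

/-- `B_R^(k)`: the gapped `k`-deck of the string punctured on the right. -/
def BRdeck (k : ℕ) (x : List Bool) : Multiset (List Bool) := Bdeck k x.dropLast

/-- `B_LR^(k)`: the gapped `k`-deck of the string punctured on both ends. -/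
def BLRdeck (k : ℕ) (x : List Bool) : Multiset (List Bool) := Bdeck k x.tail.dropLast

/-- `S(k)`: the smallest positive `n` such that two distinct binary strings of
length `n` share the same `k`-deck. -/
noncomputable def Sval (k : ℕ) : ℕ :=
  sInf {n | 0 < n ∧ ∃ x y : List Bool, x.length = n ∧ y.length = n ∧ x ≠ y ∧
    deck k x = deck k y}

/-- `G(k)`: the smallest positive `n` such that two distinct binary strings of
length `n` share the same gapped `k`-deck. -/
noncomputable def Gval (k : ℕ) : ℕ :=
  sInf {n | 0 < n ∧ ∃ x y : List Bool, x.length = n ∧ y.length = n ∧ x ≠ y ∧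
    Bdeck k x = Bdeck k y}

/-- `G_s(k)`: the smallest positive `n` such that two distinct binary strings of
length `n` share the same `s`-gapped `k`-deck. -/
noncomputable def Gs (s k : ℕ) : ℕ :=
  sInf {n | 0 < n ∧ ∃ x y : List Bool, x.length = n ∧ y.length = n ∧ x ≠ y ∧
    gDeck s k x = gDeck s k y}

/-- `G*(k)`: the smallest positive `n` such that two distinct binary strings of
length `n` share the same gapped `k`-deck, also after puncturing on the left,
right and both sides. -/
noncomputable def Gstar (k : ℕ) : ℕ :=
  sInf {n | 0 < n ∧ ∃ x y : List Bool, x.length = n ∧ y.length = n ∧ x ≠ y ∧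
    Bdeck k x = Bdeck k y ∧ BLdeck k x = BLdeck k y ∧
    BRdeck k x = BRdeck k y ∧ BLRdeck k x = BLRdeck k y}

mutual
/-- Morse-Thue string `x^(k+1)` (index shifted: `mtX 0 = x^(1) = (0,1)`). -/
def mtX : ℕ → List Bool
  | 0 => [false, true]
  | k + 1 => mtX k ++ mtY k
/-- Morse-Thue string `y^(k+1)` (index shifted: `mtY 0 = y^(1) = (1,0)`). -/
def mtY : ℕ → List Bool
  | 0 => [true, false]
  | k + 1 => mtY k ++ mtX k
end

mutual
/-- Padded Morse-Thue string `x^(k+1)` (index shifted: `px 0 = x^(1) = (0,0,1,0)`). -/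
def px : ℕ → List Bool
  | 0 => [false, false, true, false]
  | k + 1 => [false] ++ px k ++ [false, false] ++ py k ++ [false]
/-- Padded Morse-Thue string `y^(k+1)` (index shifted: `py 0 = y^(1) = (0,1,0,0)`). -/
def py : ℕ → List Bool
  | 0 => [false, true, false, false]
  | k + 1 => [false] ++ py k ++ [false, false] ++ px k ++ [false]
end

/-- Interleaving `(z₁,x₁,z₂,x₂,…,z_{k-1},x_{k-1},z_k)` of `z` and `x`
(used with `|z| = |x| + 1`). -/
def interleave : List Bool → List Bool → List Bool
  | z, [] => z
  | [], _ :: _ => []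
  | a :: l, b :: m => a :: b :: interleave l m

/-- `N(w, p)`: the number of occurrences of the wildcard string `w`
(entries `none` are wildcards `J`, `some b` is a letter of `Γ = {X, Y}`)
as a subsequence of `p`, each wildcard matching either letter. -/
def Nw : List (Option Bool) → List Bool → ℕ
  | [], _ => 1
  | _ :: _, [] => 0
  | a :: w, b :: p =>
      Nw (a :: w) p + if a = none ∨ a = some b then Nw w p else 0

/-- `U_r(k)`: wildcard strings of length between `r` and `k` with exactly `r`
non-wildcard symbols. -/
def Ur (r k : ℕ) : Set (List (Option Bool)) :=
  {w | r ≤ w.length ∧ w.length ≤ k ∧ w.countP (fun a => a.isSome) = r}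

/-- `U(k₁, k₂) = U₁(k₁) ∪ U₂(k₂)`. -/
def Uset (k1 k2 : ℕ) : Set (List (Option Bool)) := Ur 1 k1 ∪ Ur 2 k2

/-- `p ∼^{U(k₁,k₂)} q`: `N(w,p) = N(w,q)` for all `w ∈ U(k₁,k₂)`. -/
def equivU (k1 k2 : ℕ) (p q : List Bool) : Prop :=
  ∀ w ∈ Uset k1 k2, Nw w p = Nw w q

/-- `S_U(k₁,k₂)`: the smallest `m` for which two distinct strings
`p, q ∈ Γ^m` satisfy `p ∼^{U(k₁,k₂)} q`. -/
noncomputable def SU (k1 k2 : ℕ) : ℕ :=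
  sInf {m | ∃ p q : List Bool, p.length = m ∧ q.length = m ∧ p ≠ q ∧
    equivU k1 k2 p q}

/-- `h_{x,y}(p)`: replace each letter of `p` (`false = X`, `true = Y`) by `x`
resp. `y` padded with one `0` at each end. -/
def hxy (x y : List Bool) (p : List Bool) : List Bool :=
  (p.map (fun b => [false] ++ (if b then y else x) ++ [false])).flatten

/-- The sum of `Nw (pre ++ v) p` over all `v` obtained from `w` by inserting one wildcard. -/
def insertSum (pre : List (Option Bool)) : List (Option Bool) → List Bool → ℕ
  | [], p => Nw (pre ++ [none]) p
  | a :: w, p => Nw (pre ++ none :: a :: w) p + insertSum (pre ++ [a]) w p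

theorem insertSum_cons_nil (a : Option Bool) (pre w : List (Option Bool)) :
    insertSum (a :: pre) w [] = 0 := by
  induction w generalizing pre with
  | nil => simp [insertSum, Nw]
  | cons c w ih => simp [insertSum, Nw, ih]

theorem insertSum_cons_cons (a : Option Bool) (b : Bool) (pre w : List (Option Bool))
    (p : List Bool) :
    insertSum (a :: pre) w (b :: p) =
      insertSum (a :: pre) w p + if a = none ∨ a = some b then insertSum pre w p else 0 := by
  induction w generalizing pre with
  | nil => simp [insertSum, Nw]
  | cons c w ih =>
    simp only [insertSum, List.cons_append, Nw, ih]
    split_ifs <;> ring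

theorem insertSum_add_length_mul (w : List (Option Bool)) (p : List Bool) :
    insertSum [] w p + w.length * Nw w p = p.length * Nw w p := by
  induction p generalizing w with
  | nil =>
    cases w with
    | nil => simp [insertSum, Nw]
    | cons a w => simp [insertSum, Nw, insertSum_cons_nil]
  | cons b p ih =>
    cases w with
    | nil =>
      have := ih []
      simp [insertSum, Nw] at this ⊢
      exact this
    | cons a w =>
      have h1 := ih (a :: w)
      have h2 := ih w
      simp only [insertSum, List.nil_append, Nw, insertSum_cons_cons, List.length_cons,
        true_or, if_true] at h1 ⊢
      split_ifs
      · linarith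
      · linarith

theorem insertSum_replicate_append (n : ℕ) (pre w : List (Option Bool)) (p : List Bool) :
    insertSum pre (List.replicate n none ++ w) p =
      n * Nw (pre ++ List.replicate (n + 1) none ++ w) p +
        insertSum (pre ++ List.replicate n none) w p := by
  induction n generalizing pre with
  | zero => simp
  | succ n ih =>
    rw [List.replicate_succ, List.cons_append, insertSum, ih]
    simp only [List.replicate_succ, List.append_assoc, List.cons_append, List.nil_append]
    ring

theorem insertSum_replicate (n : ℕ) (pre : List (Option Bool)) (p : List Bool) :
    insertSum pre (List.replicate n none) p =
      (n + 1) * Nw (pre ++ List.replicate (n + 1) none) p := by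
  have := insertSum_replicate_append n pre [] p
  simp only [List.append_nil, insertSum, List.append_assoc] at this
  rw [this, ← List.replicate_succ']
  ring

theorem insertSum_replicate_cons (n : ℕ) (x : Bool) (pre w : List (Option Bool)) (p : List Bool) :
    insertSum pre (List.replicate n none ++ some x :: w) p =
      (n + 1) * Nw (pre ++ (List.replicate (n + 1) none ++ some x :: w)) p +
        insertSum (pre ++ (List.replicate n none ++ [some x])) w p := by
  rw [insertSum_replicate_append, insertSum]
  simp only [List.append_assoc, List.replicate_succ', List.cons_append, List.nil_append]
  ring

theorem Nw_append_none (u v : List (Option Bool)) (p : List Bool) :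
    Nw (u ++ none :: v) p = Nw (u ++ some true :: v) p + Nw (u ++ some false :: v) p := by
  induction p generalizing u with
  | nil => cases u <;> simp [Nw]
  | cons b p ih =>
    cases u with
    | nil =>
      have := ih []
      simp only [List.nil_append] at this
      cases b <;> simp [Nw, this] <;> ring
    | cons a u =>
      have h1 := ih (a :: u)
      have h2 := ih u
      simp only [List.cons_append] at h1
      simp only [List.cons_append, Nw, h1, h2]
      split_ifs <;> ring

theorem Nw_replicate_none (n : ℕ) (p : List Bool) :
    Nw (List.replicate n none) p = p.length.choose n := by
  induction p generalizing n with
  | nil => cases n <;> simp [Nw, List.replicate_succ]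
  | cons b p ih =>
    cases n with
    | zero => simp [Nw]
    | succ n =>
      have := ih (n + 1)
      rw [List.replicate_succ] at this ⊢
      simp [Nw, this, ih, Nat.choose_succ_succ, add_comm]

theorem Nw_le_choose (w : List (Option Bool)) (p : List Bool) :
    Nw w p ≤ p.length.choose w.length := by
  induction p generalizing w with
  | nil => cases w <;> simp [Nw]
  | cons b p ih =>
    cases w with
    | nil => simp [Nw]
    | cons a w =>
      have h1 := ih (a :: w)
      have h2 := ih w
      simp only [List.length_cons] at h1
      simp only [Nw, List.length_cons, Nat.choose_succ_succ']
      split_ifs <;> omega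

theorem exists_eq_replicate_of_countP_zero (w : List (Option Bool))
    (h : w.countP (fun a => a.isSome) = 0) : ∃ a, w = List.replicate a none := by
  refine ⟨w.length, List.eq_replicate_iff.2 ⟨rfl, fun b hb => ?_⟩⟩
  simpa using List.countP_eq_zero.1 h b hb

theorem exists_eq_of_countP_succ (r : ℕ) (w : List (Option Bool))
    (h : w.countP (fun a => a.isSome) = r + 1) :
    ∃ a x v, w = List.replicate a none ++ some x :: v ∧ v.countP (fun a => a.isSome) = r := by
  induction w with
  | nil => simp at h
  | cons c w ih =>
    cases c with
    | none =>
      obtain ⟨a, x, v, rfl, hv⟩ := ih (by simpa using h)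
      exact ⟨a + 1, x, v, by simp [List.replicate_succ], hv⟩
    | some x => exact ⟨0, x, w, by simp, by simpa using h⟩

section Determination

variable {p q : List Bool}

theorem Nw_one_eq (hl : p.length = q.length) (k : ℕ)
    (hA : ∀ j < k, Nw (List.replicate j none ++ [some true]) p =
      Nw (List.replicate j none ++ [some true]) q) (b : ℕ) :
    ∀ a, a + b + 1 ≤ k →
      Nw (List.replicate a none ++ some true :: List.replicate b none) p =
        Nw (List.replicate a none ++ some true :: List.replicate b none) q := by
  induction b with
  | zero => exact fun a ha => hA a (by omega)
  | succ b ih =>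
    intro a ha
    have hp := insertSum_add_length_mul
      (List.replicate a none ++ some true :: List.replicate b none) p
    have hq := insertSum_add_length_mul
      (List.replicate a none ++ some true :: List.replicate b none) q
    rw [insertSum_replicate_cons, insertSum_replicate] at hp hq
    simp only [List.nil_append, List.append_assoc, List.cons_append] at hp hq
    rw [ih a (by omega), ih (a + 1) (by omega), hl] at hp
    exact Nat.eq_of_mul_eq_mul_left (Nat.succ_pos b) (by simp only [Nat.succ_eq_add_one]; omega)

theorem Nw_two_eq (hl : p.length = q.length) (k : ℕ)
    (hB : ∀ a b, a + b + 2 ≤ k →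
      Nw (List.replicate a none ++ some true :: (List.replicate b none ++ [some true])) p =
      Nw (List.replicate a none ++ some true :: (List.replicate b none ++ [some true])) q) (c : ℕ) :
    ∀ a b, a + b + c + 2 ≤ k →
      Nw (List.replicate a none ++ some true ::
        (List.replicate b none ++ some true :: List.replicate c none)) p =
      Nw (List.replicate a none ++ some true ::
        (List.replicate b none ++ some true :: List.replicate c none)) q := by
  induction c with
  | zero => exact fun a b h => hB a b (by omega)
  | succ c ih =>
    intro a b h
    have hp := insertSum_add_length_mul (List.replicate a none ++ some true ::
        (List.replicate b none ++ some true :: List.replicate c none)) p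
    have hq := insertSum_add_length_mul (List.replicate a none ++ some true ::
        (List.replicate b none ++ some true :: List.replicate c none)) q
    rw [insertSum_replicate_cons, insertSum_replicate_cons, insertSum_replicate] at hp hq
    simp only [List.nil_append, List.append_assoc, List.cons_append] at hp hq
    rw [ih a b (by omega), ih (a + 1) b (by omega), ih a (b + 1) (by omega), hl] at hp
    exact Nat.eq_of_mul_eq_mul_left (Nat.succ_pos c) (by simp only [Nat.succ_eq_add_one]; omega)

theorem Nw_letter_eq {u v : List (Option Bool)}
    (hnone : Nw (u ++ none :: v) p = Nw (u ++ none :: v) q)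
    (htrue : Nw (u ++ some true :: v) p = Nw (u ++ some true :: v) q) (x : Bool) :
    Nw (u ++ some x :: v) p = Nw (u ++ some x :: v) q := by
  cases x with
  | true => exact htrue
  | false =>
    rw [Nw_append_none, Nw_append_none, htrue] at hnone
    omega

theorem equivU_of_generators {k1 k2 : ℕ} (h21 : k2 ≤ k1) (hl : p.length = q.length)
    (hA : ∀ j < k1, Nw (List.replicate j none ++ [some true]) p =
      Nw (List.replicate j none ++ [some true]) q)
    (hB : ∀ a b, a + b + 2 ≤ k2 →
      Nw (List.replicate a none ++ some true :: (List.replicate b none ++ [some true])) p =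
      Nw (List.replicate a none ++ some true :: (List.replicate b none ++ [some true])) q) :
    equivU k1 k2 p q := by
  have one : ∀ a b x, a + b + 1 ≤ k1 →
      Nw (List.replicate a none ++ some x :: List.replicate b none) p =
        Nw (List.replicate a none ++ some x :: List.replicate b none) q := by
    intro a b x h
    refine Nw_letter_eq ?_ (Nw_one_eq hl k1 hA b a h) x
    rw [← List.replicate_succ, List.replicate_append_replicate, Nw_replicate_none,
      Nw_replicate_none, hl]
  rintro w (⟨-, hk, hw⟩ | ⟨-, hk, hw⟩)
  · obtain ⟨a, x, v, rfl, hv⟩ := exists_eq_of_countP_succ 0 w hw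
    obtain ⟨b, rfl⟩ := exists_eq_replicate_of_countP_zero v hv
    simp only [List.length_append, List.length_cons, List.length_replicate] at hk
    exact one a b x (by omega)
  · obtain ⟨a, x, v, rfl, hv⟩ := exists_eq_of_countP_succ 1 w hw
    obtain ⟨b, y, u, rfl, hu⟩ := exists_eq_of_countP_succ 0 v hv
    obtain ⟨c, rfl⟩ := exists_eq_replicate_of_countP_zero u hu
    simp only [List.length_append, List.length_cons, List.length_replicate] at hk
    refine Nw_letter_eq ?_ ?_ x
    · have := one (a + 1 + b) c y (by omega)
      rw [List.replicate_add, List.replicate_succ'] at this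
      simpa using this
    · have e (z : Option Bool) : List.replicate a none ++ some true ::
          (List.replicate b none ++ z :: List.replicate c none) =
          (List.replicate a none ++ some true :: List.replicate b none) ++
            z :: List.replicate c none := by simp
      rw [e]
      refine Nw_letter_eq ?_ ?_ y
      · rw [← e, ← List.replicate_succ, List.replicate_append_replicate]
        exact one a _ true (by omega)
      · rw [← e]
        exact Nw_two_eq hl k2 hB c a b (by omega)

end Determination

theorem choose_add_one_le_pow {m n : ℕ} (hm : 2 ≤ m) (hn : 2 ≤ n) :
    m.choose n + 1 ≤ m ^ n := by
  have h1 := Nat.descFactorial_le_pow m n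
  rw [Nat.descFactorial_eq_factorial_mul_choose] at h1
  have h2 : 2 ≤ n.factorial := hn.trans (Nat.self_le_factorial n)
  have h3 : 2 * m.choose n ≤ m ^ n := (Nat.mul_le_mul_right _ h2).trans h1
  have h4 : 2 ≤ m ^ n := hm.trans (Nat.le_self_pow (by omega) m)
  omega

theorem prod_choose_add_one_le {m k : ℕ} (hm : 2 ≤ m) (hk : 2 ≤ k) :
    ∏ j ∈ Finset.range k, (m.choose (j + 1) + 1) ≤ m ^ (k ^ 2 - 1) := by
  induction k, hk using Nat.le_induction with
  | base =>
    simp only [Finset.prod_range_succ, Finset.prod_range_zero, zero_add, one_mul,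
      Nat.choose_one_right, Nat.reduceAdd, Nat.reducePow, Nat.reduceSub]
    have h := Nat.choose_two_right m
    have h' := Nat.div_mul_le_self (m * (m - 1)) 2
    rw [← h] at h'
    obtain ⟨n, rfl⟩ := Nat.exists_eq_add_of_le hm
    have e : 2 + n - 1 = n + 1 := by omega
    rw [e] at h'
    nlinarith [Nat.zero_le n, Nat.zero_le (n ^ 2), Nat.zero_le (n ^ 3)]
  | succ k hk ih =>
    rw [Finset.prod_range_succ]
    refine (Nat.mul_le_mul ih (choose_add_one_le_pow hm (by omega))).trans ?_
    rw [← pow_add]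
    refine Nat.pow_le_pow_right (by omega) ?_
    have : (k + 1) ^ 2 = k ^ 2 + 2 * k + 1 := by ring
    have : 0 < k ^ 2 := by positivity
    omega

/-- The wildcard strings whose counts determine the class of a string under `equivU k1 k2`. -/
def generator (k1 k2 : ℕ) : Fin k1 ⊕ (Σ i : Fin (k2 - 1), Fin (i + 1)) → List (Option Bool)
  | .inl j => List.replicate j none ++ [some true]
  | .inr ⟨i, a⟩ =>
      List.replicate a none ++ some true :: (List.replicate (i - a) none ++ [some true])

theorem prod_generator_le {m k1 k2 : ℕ} (hm : 2 ≤ m) (h1 : 2 ≤ k1) :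
    ∏ d, (m.choose (generator k1 k2 d).length + 1) ≤
      m ^ (k1 ^ 2 - 1 + k2 * (k2 * (k2 - 1) / 2)) := by
  rw [Fintype.prod_sum_type, pow_add]
  refine Nat.mul_le_mul ?_ ?_
  · have := prod_choose_add_one_le hm h1
    rw [Finset.prod_range] at this
    simpa [generator] using this
  · have hc : Fintype.card (Σ i : Fin (k2 - 1), Fin (i + 1)) = k2 * (k2 - 1) / 2 := by
      rw [Fintype.card_sigma]
      simp only [Fintype.card_fin]
      rw [← Finset.sum_range (fun i => i + 1), ← Finset.sum_range_id]
      cases k2 with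
      | zero => simp
      | succ k => simp [Finset.sum_range_succ']
    rw [pow_mul, ← hc]
    refine Finset.prod_le_pow_card _ _ _ ?_
    rintro ⟨i, a⟩ -
    have hi := i.2
    have ha := a.2
    refine (choose_add_one_le_pow hm ?_).trans (Nat.pow_le_pow_right (by omega) ?_)
    · simp only [generator, List.length_append, List.length_cons, List.length_replicate]
      omega
    · simp only [generator, List.length_append, List.length_cons, List.length_replicate,
        List.length_nil]
      omega

theorem SU_le_of_pow_lt {m k1 k2 : ℕ} (h21 : k2 ≤ k1) (h1 : 2 ≤ k1) (hm : 2 ≤ m)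
    (h : m ^ (k1 ^ 2 - 1 + k2 * (k2 * (k2 - 1) / 2)) < 2 ^ m) : SU k1 k2 ≤ m := by
  let Φ : List.Vector Bool m → ∀ d, Fin (m.choose (generator k1 k2 d).length + 1) :=
    fun p d => ⟨Nw (generator k1 k2 d) p.1, Nat.lt_succ_of_le <| by
      have := Nw_le_choose (generator k1 k2 d) p.1
      rwa [p.2] at this⟩
  have hcard : Fintype.card (∀ d, Fin (m.choose (generator k1 k2 d).length + 1)) <
      Fintype.card (List.Vector Bool m) := by
    rw [card_vector, Fintype.card_bool, Fintype.card_pi]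
    simp only [Fintype.card_fin]
    exact (prod_generator_le hm h1).trans_lt h
  obtain ⟨p, q, hpq, hΦ⟩ := Fintype.exists_ne_map_eq_of_card_lt Φ hcard
  have key : ∀ d, Nw (generator k1 k2 d) p.1 = Nw (generator k1 k2 d) q.1 :=
    fun d => congrArg Fin.val (congrFun hΦ d)
  refine Nat.sInf_le ⟨p.1, q.1, p.2, q.2, fun e => hpq (Subtype.ext e),
    equivU_of_generators h21 (p.2.trans q.2.symm) (fun j hj => key (.inl ⟨j, hj⟩)) ?_⟩
  intro a b hab
  have := key (.inr ⟨⟨a + b, by omega⟩, ⟨a, by simp only; omega⟩⟩)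
  simpa [generator] using this

theorem logb_two_add_one_le {L : ℝ} (hL : 2 ≤ L) : Real.logb 2 L + 1 ≤ L := by
  have h1 : Real.log (L / 2) ≤ L / 2 - 1 := Real.log_le_sub_one_of_pos (by linarith)
  rw [Real.log_div (by linarith) (by norm_num)] at h1
  have h2 : (1 : ℝ) / 2 < Real.log 2 := by linarith [Real.log_two_gt_d9]
  have h3 : Real.logb 2 L ≤ L - 1 := by
    rw [Real.logb, div_le_iff₀ (by linarith)]
    nlinarith
  linarith

theorem pow_floor_lt {κ : ℝ} {E : ℕ} (hκ : 4 ≤ κ) (hE : (E : ℝ) = κ - 1) :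
    let m := ⌊κ * (Real.logb 2 κ + Real.logb 2 (Real.logb 2 κ) + 1)⌋₊
    2 ≤ m ∧ m ^ E < 2 ^ m := by
  intro m
  set L := Real.logb 2 κ with hLdef
  have hL : 2 ≤ L := by
    rw [hLdef, Real.le_logb_iff_rpow_le (by norm_num) (by linarith)]
    norm_num
    exact hκ
  have hl : 0 ≤ Real.logb 2 L := Real.logb_nonneg (by norm_num) (by linarith)
  set M := κ * (L + Real.logb 2 L + 1) with hM
  have hM12 : 12 ≤ M := by nlinarith
  have hm2 : 2 ≤ m := Nat.le_floor (by push_cast; linarith)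
  refine ⟨hm2, ?_⟩
  have hmM : (m : ℝ) ≤ M := Nat.floor_le (by linarith)
  have hMm : M < m + 1 := Nat.lt_floor_add_one M
  have hm0 : (0 : ℝ) < m := by positivity
  have hlogM : Real.logb 2 M ≤ L + Real.logb 2 L + 1 := by
    have h1 : Real.logb 2 (L + Real.logb 2 L + 1) ≤ Real.logb 2 (2 * L) :=
      Real.logb_le_logb_of_le (by norm_num) (by linarith) (by linarith [logb_two_add_one_le hL])
    rw [Real.logb_mul (by norm_num) (by linarith), Real.logb_self_eq_one (by norm_num)] at h1
    rw [hM, Real.logb_mul (by linarith) (by linarith)]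
    linarith
  have hlogm : Real.logb 2 m ≤ L + Real.logb 2 L + 1 :=
    (Real.logb_le_logb_of_le (by norm_num) hm0 hmM).trans hlogM
  have hlt : Real.logb 2 ((m : ℝ) ^ E) < m := by
    rw [Real.logb_pow, hE]
    nlinarith
  rw [Real.logb_lt_iff_lt_rpow (by norm_num) (by positivity), Real.rpow_natCast] at hlt
  exact_mod_cast hlt

/-- Dudik–Schulman: For `k₁ ≥ k₂ ≥ 2` and
`κ = k₁² + k₂²(k₂-1)/2`, one has `S_U(k₁,k₂) ≤ κ(lg κ + lg lg κ + 1)`. -/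
theorem stmt11 (k1 k2 : ℕ) (h21 : k2 ≤ k1) (h2 : 2 ≤ k2) (κ : ℝ)
    (hκ : κ = (k1 : ℝ) ^ 2 + (k2 : ℝ) ^ 2 * ((k2 : ℝ) - 1) / 2) :
    (SU k1 k2 : ℝ) ≤ κ * (Real.logb 2 κ + Real.logb 2 (Real.logb 2 κ) + 1) := by
  have hc : (2 : ℝ) ≤ k2 := by exact_mod_cast h2
  have hk : (k2 : ℝ) ≤ k1 := by exact_mod_cast h21
  have hE : ((k1 ^ 2 - 1 + k2 * (k2 * (k2 - 1) / 2) : ℕ) : ℝ) = κ - 1 := by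
    rw [Nat.cast_add, Nat.cast_mul, Nat.cast_sub (Nat.one_le_pow _ _ (by omega)),
      Nat.cast_div (Nat.even_mul_pred_self k2).two_dvd (by norm_num), Nat.cast_mul,
      Nat.cast_sub (by omega), hκ]
    push_cast
    ring
  have hκ4 : 4 ≤ κ := by
    have : 0 ≤ (k2 : ℝ) ^ 2 * ((k2 : ℝ) - 1) / 2 :=
      div_nonneg (mul_nonneg (sq_nonneg _) (by linarith)) (by norm_num)
    nlinarith
  obtain ⟨hm, hlt⟩ := pow_floor_lt hκ4 hE
  refine (Nat.cast_le.2 (SU_le_of_pow_lt h21 (h2.trans h21) hm hlt)).trans (Nat.floor_le ?_)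
  by_contra! hneg
  rw [Nat.floor_of_nonpos hneg.le] at hm
  omega
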